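/- The measure Q∞ is stationary for the transition probability function Q: for every Borel set B ⊆ W one has ∫_W Q(w,B) Q∞(dw) = Q∞(B). -/

import Mathlib

open Real MeasureTheory Filter Set
open scoped ENNReal NNReal Classical

namespace OCF

/-- The golden ratio `G = (1+√5)/2`. -/
noncomputable def G : ℝ := (1 + Real.sqrt 5) / 2

/-- `g = (√5-1)/2`. -/
noncomputable def gg : ℝ := (Real.sqrt 5 - 1) / 2

/-- The map `u : W × X → W` of the RSCC; `uF w e i = u(w,(e,i))`. -/
noncomputable def uF (w : ℝ) (e i : ℤ) : ℝ :=
  if e = 1 then 1 / (i + w)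
  else if w < gg ^ 2 then 1 / (i - w) else 1 / (i - gg ^ 2)

/-- The probabilities `P : W × X → [0,∞)` of the RSCC; `PF w e i = P(w,(e,i))`. -/
noncomputable def PF (w : ℝ) (e i : ℤ) : ℝ :=
  if w < gg ^ 2 then
    (1 - w ^ 2) * (2 - (if i = 1 then 1 else 0)) /
      (2 * ((i : ℝ) - 1 + (if i = 1 then 1 else 0) + (e : ℝ) * w) * ((i : ℝ) + 1 + (e : ℝ) * w))
  else
    (1 + w) * (2 - (if i = 1 then 1 else 0)) * (if e = 1 then 1 else 0) /
      (((i : ℝ) - 1 + (if i = 1 then 1 else 0) + w) * ((i : ℝ) + 1 + w))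

/-- The transition probability function
`Q(w,B) = Σ_{(e,i) ∈ X : u(w,(e,i)) ∈ B} P(w,(e,i))`, where odd `i` is written as `2m+1`. -/
noncomputable def Qf (w : ℝ) (B : Set ℝ) : ℝ :=
  ∑' m : ℕ, ((if uF w 1 (2 * (m : ℤ) + 1) ∈ B then PF w 1 (2 * (m : ℤ) + 1) else 0)
           + (if uF w (-1) (2 * (m : ℤ) + 1) ∈ B then PF w (-1) (2 * (m : ℤ) + 1) else 0))

/-- The stationary probability measure `Q∞` on `W = [0,G]`. -/
noncomputable def Qinf : Measure ℝ :=
  (volume.restrict (Set.Icc (0 : ℝ) G)).withDensity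
    (fun w => ENNReal.ofReal ((3 * Real.log G)⁻¹ *
      (if w < gg ^ 2 then 1 / (1 + w) + 1 / (1 - w) else 1 / (1 + w))))

/-- The transition operator `U` of the Markov chain: `Uf(w) = Σ_{(e,i)} P(w,(e,i)) f(u(w,(e,i)))`. -/
noncomputable def U (f : ℝ → ℂ) : ℝ → ℂ := fun w =>
  ∑' m : ℕ, ((PF w 1 (2 * (m : ℤ) + 1) : ℂ) * f (uF w 1 (2 * (m : ℤ) + 1))
           + (PF w (-1) (2 * (m : ℤ) + 1) : ℂ) * f (uF w (-1) (2 * (m : ℤ) + 1)))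

/-- The `n`-step transition probability, as a measure-valued kernel: `Qiter 1 w = Q(w,·)` and
`Qiter (n+1) w B = ∫_W Qiter n w' B Q(w,dw')` (the transition measure `Q(w,·)` being purely
atomic with atom `u(w,(e,i))` of mass `P(w,(e,i))`). -/
noncomputable def Qiter : ℕ → ℝ → Measure ℝ
  | 0 => fun w => Measure.dirac w
  | n + 1 => fun w => Measure.sum (fun m : ℕ =>
      ENNReal.ofReal (PF w 1 (2 * (m : ℤ) + 1)) • Qiter n (uF w 1 (2 * (m : ℤ) + 1)) +
      ENNReal.ofReal (PF w (-1) (2 * (m : ℤ) + 1)) • Qiter n (uF w (-1) (2 * (m : ℤ) + 1)))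

end OCF

open OCF

namespace OCF

lemma gg_sq : gg ^ 2 = 1 - gg := by
  have h : Real.sqrt 5 ^ 2 = 5 := Real.sq_sqrt (by norm_num)
  unfold gg; nlinarith

lemma G_eq : G = 1 + gg := by unfold G gg; ring

lemma gg_lo : 0.6 < gg := by
  have : (2.2:ℝ) < Real.sqrt 5 := Real.lt_sqrt_of_sq_lt (by norm_num)
  unfold gg; linarith

lemma gg_hi : gg < 0.7 := by
  have : Real.sqrt 5 < (2.4:ℝ) := (Real.sqrt_lt' (by norm_num)).2 (by norm_num)
  unfold gg; linarith

noncomputable def dens (w : ℝ) : ℝ := (3 * Real.log G)⁻¹ *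
      (if w < gg ^ 2 then 1 / (1 + w) + 1 / (1 - w) else 1 / (1 + w))

lemma c_nonneg : 0 ≤ (3 * Real.log G)⁻¹ := by
  have : 0 ≤ Real.log G := Real.log_nonneg (by rw [G_eq]; linarith [gg_lo])
  positivity

lemma dens_nonneg {w : ℝ} (hw : 0 ≤ w) : 0 ≤ dens w := by
  unfold dens
  apply mul_nonneg c_nonneg
  split_ifs with h
  · have : 0 < 1 - w := by linarith [gg_sq, gg_lo]
    positivity
  · positivity

lemma dens_le {w : ℝ} (hw : 0 ≤ w) : dens w ≤ (3 * Real.log G)⁻¹ * 3 := by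
  unfold dens
  apply mul_le_mul_of_nonneg_left _ c_nonneg
  have h1 : 1 / (1 + w) ≤ 1 := by rw [div_le_one (by linarith)]; linarith
  split_ifs with h
  · have : 1 / (1 - w) ≤ 2 := by
      rw [div_le_iff₀ (by linarith [gg_sq, gg_lo])]; linarith [gg_sq, gg_lo]
    linarith
  · linarith

lemma dens_meas : Measurable dens := by
  unfold dens
  refine Measurable.const_mul (Measurable.ite measurableSet_Iio ?_ ?_) _ <;> fun_prop

lemma uF_meas (e i : ℤ) : Measurable (fun w => uF w e i) := by
  unfold uF
  split_ifs
  · fun_prop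
  · refine Measurable.ite measurableSet_Iio ?_ ?_ <;> fun_prop

lemma PF_meas (e i : ℤ) : Measurable (fun w => PF w e i) := by
  unfold PF
  refine Measurable.ite measurableSet_Iio ?_ ?_ <;> fun_prop

noncomputable def T (B : Set ℝ) (e : ℤ) (m : ℕ) (w : ℝ) : ℝ :=
  if uF w e (2 * (m : ℤ) + 1) ∈ B then PF w e (2 * (m : ℤ) + 1) else 0

lemma T_meas {B : Set ℝ} (hB : MeasurableSet B) (e : ℤ) (m : ℕ) : Measurable (T B e m) := by
  unfold T
  exact Measurable.ite (uF_meas e _ hB) (PF_meas e _) measurable_const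

lemma PF_zero {w : ℝ} (h : ¬ w < gg ^ 2) (i : ℤ) : PF w (-1) i = 0 := by
  simp [PF, h]

lemma PF_nonneg {w : ℝ} (hw : 0 ≤ w) (e : ℤ) (he : e = 1 ∨ e = -1) (m : ℕ) :
    0 ≤ PF w e (2 * (m : ℤ) + 1) := by
  unfold PF
  rcases Nat.eq_zero_or_pos m with rfl | hm
  · split_ifs with h h2 h3 <;> try (simp at *; done)
    · have : w < 1 := by linarith [gg_sq, gg_lo]
      rcases he with rfl | rfl <;> norm_num <;> apply div_nonneg <;>
        nlinarith
    all_goals norm_num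
    all_goals positivity
  · have hm' : ¬ (2 * (m:ℤ) + 1 = 1) := by omega
    have hm1 : (1:ℝ) ≤ m := by exact_mod_cast hm
    simp only [hm', if_false]
    push_cast
    split_ifs with h h2
    · have : w < 1 := by linarith [gg_sq, gg_lo]
      have h1 : 0 ≤ 1 - w ^ 2 := by nlinarith
      rcases he with rfl | rfl <;> push_cast <;> apply div_nonneg
      · linarith
      · apply mul_nonneg <;> linarith
      · linarith
      · apply mul_nonneg <;> linarith
    · apply div_nonneg
      · linarith
      · apply mul_nonneg <;> linarith
    · simp

lemma T_nonneg {B : Set ℝ} {w : ℝ} (hw : 0 ≤ w) (e : ℤ) (he : e = 1 ∨ e = -1) (m : ℕ) :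
    0 ≤ T B e m w := by
  unfold T; split_ifs
  · exact PF_nonneg hw e he m
  · exact le_rfl

lemma key1 {w : ℝ} (h0 : 0 < w) (h1 : w ≤ G) (m : ℕ) :
    dens w * PF w 1 (2 * (m : ℤ) + 1) =
      1 / (2 * (m:ℝ) + 1 + w) ^ 2 * dens (1 / (2 * (m:ℝ) + 1 + w)) := by
  have a := gg_sq
  have b := gg_lo
  have b' := gg_hi
  rw [G_eq] at h1
  unfold dens
  rw [mul_assoc, mul_left_comm (1 / (2 * (m:ℝ) + 1 + w) ^ 2)]
  congr 1
  rcases Nat.eq_zero_or_pos m with rfl | hm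
  · have hc : ¬ (1 / (2 * ((0:ℕ):ℝ) + 1 + w) < gg ^ 2) := by
      rw [not_lt, le_div_iff₀ (by push_cast; linarith)]
      push_cast; nlinarith
    rw [if_neg hc]
    unfold PF
    split_ifs with h h2 <;> try (simp at *; done)
    · have : w < 1 := by linarith
      have : 1 - w ≠ 0 := by linarith
      have : 1 + w ≠ 0 := by linarith
      have : 2 + w ≠ 0 := by linarith
      have : 1 + 1 / (1 + w) ≠ 0 := by positivity
      norm_num
      field_simp
      ring
    · norm_num
      field_simp
      ring
  · have hm' : ¬ (2 * (m:ℤ) + 1 = 1) := by omega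
    have hm1 : (1:ℝ) ≤ m := by exact_mod_cast hm
    have hc : 1 / (2 * (m:ℝ) + 1 + w) < gg ^ 2 := by
      rw [div_lt_iff₀ (by linarith)]
      nlinarith
    rw [if_pos hc]
    have hx : 1 - 1 / (2 * (m:ℝ) + 1 + w) = (2 * m + w) / (2 * (m:ℝ) + 1 + w) := by
      field_simp; ring
    have hy : 1 + 1 / (2 * (m:ℝ) + 1 + w) = (2 * m + 2 + w) / (2 * (m:ℝ) + 1 + w) := by
      field_simp; ring
    rw [hx, hy]
    unfold PF
    simp only [hm', if_false]
    push_cast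
    have e1 : 2 * (m:ℝ) + 1 - 1 + 0 + 1 * w = 2 * m + w := by ring
    have e2 : 2 * (m:ℝ) + 1 + 1 + 1 * w = 2 * m + 2 + w := by ring
    have e3 : 2 * (m:ℝ) + 1 - 1 + 0 + w = 2 * m + w := by ring
    have e4 : 2 * (m:ℝ) + 1 + 1 + w = 2 * m + 2 + w := by ring
    rw [e1, e2, e3, e4]
    split_ifs with h
    · have : 1 - w ≠ 0 := by linarith
      field_simp
      ring
    · field_simp
      ring

lemma key2 {w : ℝ} (h0 : 0 ≤ w) (h1 : w < gg ^ 2) (m : ℕ) :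
    dens w * PF w (-1) (2 * (m : ℤ) + 1) =
      1 / (2 * (m:ℝ) + 1 - w) ^ 2 * dens (1 / (2 * (m:ℝ) + 1 - w)) := by
  have a := gg_sq
  have b := gg_lo
  have b' := gg_hi
  unfold dens
  rw [mul_assoc, mul_left_comm (1 / (2 * (m:ℝ) + 1 - w) ^ 2)]
  congr 1
  have hw1 : 0 < 1 - w := by linarith
  rcases Nat.eq_zero_or_pos m with rfl | hm
  · have hc : ¬ (1 / (2 * ((0:ℕ):ℝ) + 1 - w) < gg ^ 2) := by
      rw [not_lt, le_div_iff₀ (by push_cast; linarith)]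
      push_cast; nlinarith
    rw [if_neg hc]
    unfold PF
    rw [if_pos h1, if_pos h1]
    have : 2 - w ≠ 0 := by linarith
    have hx : 1 + 1 / (1 - w) = (2 - w) / (1 - w) := by field_simp; ring
    norm_num
    rw [← one_div (1 - w), hx]
    have e1 : 1 + -w = 1 - w := by ring
    have e2 : 2 + -w = 2 - w := by ring
    rw [e1, e2]
    field_simp
    ring
  · have hm' : ¬ (2 * (m:ℤ) + 1 = 1) := by omega
    have hm1 : (1:ℝ) ≤ m := by exact_mod_cast hm
    have p1 : 0 < 2 * (m:ℝ) + 1 - w := by linarith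
    have p2 : 0 < 2 * (m:ℝ) - w := by linarith
    have p3 : 0 < 2 * (m:ℝ) + 2 - w := by linarith
    have hc : 1 / (2 * (m:ℝ) + 1 - w) < gg ^ 2 := by
      rw [div_lt_iff₀ (by linarith)]
      nlinarith
    rw [if_pos hc, if_pos h1]
    have hx : 1 - 1 / (2 * (m:ℝ) + 1 - w) = (2 * m - w) / (2 * (m:ℝ) + 1 - w) := by
      field_simp; ring
    have hy : 1 + 1 / (2 * (m:ℝ) + 1 - w) = (2 * m + 2 - w) / (2 * (m:ℝ) + 1 - w) := by
      field_simp; ring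
    rw [hx, hy]
    unfold PF
    simp only [hm', if_false, if_pos h1]
    push_cast
    have e1 : 2 * (m:ℝ) + 1 - 1 + 0 + -1 * w = 2 * m - w := by ring
    have e2 : 2 * (m:ℝ) + 1 + 1 + -1 * w = 2 * m + 2 - w := by ring
    rw [e1, e2]
    have q3 : 2 * ((m:ℝ) + 1) - w ≠ 0 := by linarith
    field_simp
    ring

noncomputable def aa (m : ℕ) : ℝ := 1 / (2 * (m:ℝ) + 1 - gg ^ 2)

noncomputable def HH (B : Set ℝ) (y : ℝ) : ℝ≥0∞ := B.indicator (fun y => ENNReal.ofReal (dens y)) y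

lemma den_pos (m : ℕ) : 0 < 2 * (m:ℝ) + 1 - gg ^ 2 := by
  have : (0:ℝ) ≤ m := by positivity
  linarith [gg_sq, gg_lo]

lemma aa_succ (m : ℕ) : aa (m+1) = 1 / (2 * (m:ℝ) + 1 + G) := by
  unfold aa; rw [gg_sq, G_eq]; push_cast; congr 1; ring

lemma aa_zero : aa 0 = G := by
  unfold aa; rw [gg_sq, G_eq]
  have := gg_lo
  have := gg_sq
  push_cast
  rw [div_eq_iff (by linarith)]
  nlinarith

lemma aa_anti : Antitone aa := by
  intro m n h
  have h' : (m:ℝ) ≤ n := by exact_mod_cast h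
  unfold aa
  apply one_div_le_one_div_of_le (den_pos m)
  linarith

lemma aa_union : (⋃ m : ℕ, Ico (aa (m+1)) (aa m)) = Ioo 0 G := by
  ext y
  simp only [mem_iUnion, mem_Ico, mem_Ioo]
  constructor
  · rintro ⟨m, h1, h2⟩
    refine ⟨lt_of_lt_of_le ?_ h1, lt_of_lt_of_le h2 ?_⟩
    · exact one_div_pos.2 (den_pos _)
    · rw [← aa_zero]; exact aa_anti (Nat.zero_le m)
  · rintro ⟨h1, h2⟩
    have hex : ∃ m : ℕ, aa m ≤ y := by
      obtain ⟨n, hn⟩ := exists_nat_gt (1 / y)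
      refine ⟨n, ?_⟩
      unfold aa
      rw [div_le_iff₀ (den_pos n)]
      rw [div_lt_iff₀ h1] at hn
      have : (0:ℝ) ≤ n := by positivity
      have := gg_sq
      have := gg_lo
      nlinarith
    have hs := Nat.find_spec hex
    have hmin := fun k => Nat.find_min (m := k) hex
    generalize Nat.find hex = N at hs hmin
    cases N with
    | zero => rw [aa_zero] at hs; linarith
    | succ k => exact ⟨k, hs, not_le.1 (hmin k (Nat.lt_succ_self k))⟩

lemma int1 (B : Set ℝ) (m : ℕ) :
    ∫⁻ w in Icc 0 G, ENNReal.ofReal (dens w) * ENNReal.ofReal (T B 1 m w) =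
      ∫⁻ y in Ico (aa (m+1)) (1 / (2 * (m:ℝ) + 1)), HH B y := by
  have hm : (0:ℝ) ≤ m := by positivity
  have hG : 0 < G := by rw [G_eq]; linarith [gg_lo]
  have him : (fun w : ℝ => 1 / (2 * (m:ℝ) + 1 + w)) '' (Ioc 0 G) =
      Ico (aa (m+1)) (1 / (2 * (m:ℝ) + 1)) := by
    rw [aa_succ]
    ext y
    simp only [mem_image, mem_Ioc, mem_Ico]
    constructor
    · rintro ⟨w, ⟨h1, h2⟩, rfl⟩
      exact ⟨one_div_le_one_div_of_le (by linarith) (by linarith),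
        one_div_lt_one_div_of_lt (by linarith) (by linarith)⟩
    · rintro ⟨h1, h2⟩
      have hy : 0 < y := lt_of_lt_of_le (by positivity) h1
      refine ⟨1 / y - (2 * m + 1), ⟨?_, ?_⟩, ?_⟩
      · rw [lt_div_iff₀ (by linarith)] at h2
        rw [sub_pos, lt_div_iff₀ hy]; linarith
      · rw [div_le_iff₀ (by linarith)] at h1
        rw [sub_le_iff_le_add, div_le_iff₀ hy]; linarith
      · simp
  rw [← him, lintegral_image_eq_lintegral_abs_deriv_mul
    (f' := fun w => - 1 / (2 * (m:ℝ) + 1 + w) ^ 2) measurableSet_Ioc]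
  · rw [setLIntegral_congr (Ioc_ae_eq_Icc (μ := volume)).symm]
    apply setLIntegral_congr_fun measurableSet_Ioc
    rintro w ⟨h0, h1⟩
    have hu : uF w 1 (2 * (m:ℤ) + 1) = 1 / (2 * (m:ℝ) + 1 + w) := by
      simp [uF]
    have hk := key1 h0 h1 m
    simp only [HH, T, hu, indicator]
    split_ifs with hb
    · rw [← ENNReal.ofReal_mul (dens_nonneg h0.le), ← ENNReal.ofReal_mul (abs_nonneg _), hk]
      congr 2
      rw [neg_div, abs_neg, abs_of_nonneg (by positivity)]
    · simp
  · rintro w ⟨h0, h1⟩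
    have := ((hasDerivAt_id w).const_add (2 * (m:ℝ) + 1)).fun_inv (by simp; linarith)
    simpa using this.hasDerivWithinAt
  · rintro w ⟨h0, h1⟩ v ⟨h2, h3⟩ h
    simpa using h

lemma int2 (B : Set ℝ) (m : ℕ) :
    ∫⁻ w in Icc 0 G, ENNReal.ofReal (dens w) * ENNReal.ofReal (T B (-1) m w) =
      ∫⁻ y in Ico (1 / (2 * (m:ℝ) + 1)) (aa m), HH B y := by
  have hm : (0:ℝ) ≤ m := by positivity
  have a := gg_sq
  have b := gg_lo
  have b' := gg_hi
  have hd := den_pos m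
  have him : (fun w : ℝ => 1 / (2 * (m:ℝ) + 1 - w)) '' (Ico 0 (gg ^ 2)) =
      Ico (1 / (2 * (m:ℝ) + 1)) (aa m) := by
    unfold aa
    ext y
    simp only [mem_image, mem_Ico]
    constructor
    · rintro ⟨w, ⟨h1, h2⟩, rfl⟩
      exact ⟨one_div_le_one_div_of_le (by linarith) (by linarith),
        one_div_lt_one_div_of_lt (by linarith) (by linarith)⟩
    · rintro ⟨h1, h2⟩
      have hy : 0 < y := lt_of_lt_of_le (by positivity) h1
      refine ⟨(2 * m + 1) - 1 / y, ⟨?_, ?_⟩, ?_⟩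
      · rw [div_le_iff₀ (by linarith)] at h1
        rw [sub_nonneg, div_le_iff₀ hy]; linarith
      · rw [lt_div_iff₀ (by linarith)] at h2
        rw [sub_lt_comm, lt_div_iff₀ hy]; linarith
      · simp
  have hsub : Icc 0 G ∩ Iio (gg ^ 2) = Ico 0 (gg ^ 2) := by
    ext w
    simp only [mem_inter_iff, mem_Icc, mem_Iio, mem_Ico]
    rw [G_eq]
    constructor
    · rintro ⟨⟨h1, h2⟩, h3⟩; exact ⟨h1, h3⟩
    · rintro ⟨h1, h2⟩; exact ⟨⟨h1, by linarith⟩, h2⟩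
  have hL : ∫⁻ w in Icc 0 G, ENNReal.ofReal (dens w) * ENNReal.ofReal (T B (-1) m w) =
      ∫⁻ w in Ico 0 (gg ^ 2), ENNReal.ofReal (dens w) * ENNReal.ofReal (T B (-1) m w) := by
    rw [← hsub, inter_comm, ← setLIntegral_indicator measurableSet_Iio]
    congr 1
    ext w
    by_cases h : w < gg ^ 2
    · rw [indicator_of_mem (by exact h)]
    · rw [indicator_of_notMem (by exact h)]
      simp [T, PF_zero h]
  rw [hL, ← him, lintegral_image_eq_lintegral_abs_deriv_mul
    (f' := fun w => 1 / (2 * (m:ℝ) + 1 - w) ^ 2) measurableSet_Ico]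
  · apply setLIntegral_congr_fun measurableSet_Ico
    rintro w ⟨h0, h1⟩
    have hu : uF w (-1) (2 * (m:ℤ) + 1) = 1 / (2 * (m:ℝ) + 1 - w) := by
      simp [uF, h1]
    have hk := key2 h0 h1 m
    simp only [HH, T, hu, indicator]
    split_ifs with hb
    · rw [← ENNReal.ofReal_mul (dens_nonneg h0), ← ENNReal.ofReal_mul (abs_nonneg _), hk]
      congr 2
      rw [abs_of_nonneg (by positivity)]
    · simp
  · rintro w ⟨h0, h1⟩
    have := ((hasDerivAt_id w).const_sub (2 * (m:ℝ) + 1)).fun_inv (by simp; linarith)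
    simpa using this.hasDerivWithinAt
  · rintro w ⟨h0, h1⟩ v ⟨h2, h3⟩ h
    simpa using h

lemma Qinf_eq : Qinf = (volume.restrict (Icc (0 : ℝ) G)).withDensity
    (fun w => ENNReal.ofReal (dens w)) := rfl

lemma Qinf_apply {B : Set ℝ} (hB : MeasurableSet B) :
    Qinf B = ∫⁻ y in Icc 0 G, HH B y := by
  rw [Qinf_eq, withDensity_apply _ hB, ← lintegral_indicator hB]
  rfl

lemma Qinf_ne_top {B : Set ℝ} (hB : MeasurableSet B) : Qinf B ≠ ⊤ := by
  rw [Qinf_apply hB]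
  refine ne_top_of_le_ne_top ?_ (setLIntegral_mono (g := fun _ =>
    ENNReal.ofReal ((3 * Real.log G)⁻¹ * 3)) measurable_const ?_)
  · simp [ENNReal.mul_eq_top]
  · rintro y ⟨h0, h1⟩
    refine (indicator_le_self _ _ _).trans (ENNReal.ofReal_le_ofReal (dens_le h0))

noncomputable def FF (B : Set ℝ) (w : ℝ) : ℝ≥0∞ :=
  ∑' m : ℕ, (ENNReal.ofReal (T B 1 m w) + ENNReal.ofReal (T B (-1) m w))

lemma FF_meas {B : Set ℝ} (hB : MeasurableSet B) : Measurable (FF B) := by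
  unfold FF
  exact Measurable.tsum fun m =>
    (T_meas hB 1 m).ennreal_ofReal.add (T_meas hB (-1) m).ennreal_ofReal

lemma FF_int {B : Set ℝ} (hB : MeasurableSet B) : ∫⁻ w, FF B w ∂Qinf = Qinf B := by
  rw [Qinf_apply hB, Qinf_eq, lintegral_withDensity_eq_lintegral_mul _
    dens_meas.ennreal_ofReal (FF_meas hB)]
  simp only [Pi.mul_apply, FF, ← ENNReal.tsum_mul_left, mul_add]
  have t := fun e m => (T_meas hB e m).ennreal_ofReal
  have d := dens_meas.ennreal_ofReal
  rw [lintegral_tsum (fun m => ((d.fun_mul (t 1 m)).fun_add (d.fun_mul (t (-1) m))).aemeasurable)]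
  rw [← setLIntegral_congr (Ioo_ae_eq_Icc (μ := volume)), ← aa_union, lintegral_iUnion
    (fun _ => measurableSet_Ico) (show Pairwise (Function.onFun Disjoint fun m : ℕ => Ico (aa (m+1)) (aa m)) from
      aa_anti.pairwise_disjoint_on_Ico_succ)]
  congr 1
  ext m
  have hm : (0:ℝ) ≤ m := by positivity
  rw [lintegral_add_left (d.fun_mul (t 1 m)), int1, int2,
    ← lintegral_union measurableSet_Ico, Ico_union_Ico_eq_Ico]
  · rw [aa_succ, G_eq]
    exact one_div_le_one_div_of_le (by linarith) (by linarith [gg_lo])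
  · exact one_div_le_one_div_of_le (den_pos m) (by linarith [sq_nonneg gg])
  · rw [Set.disjoint_left]
    rintro x ⟨_, h⟩ ⟨h', _⟩
    linarith

end OCF

/-- The measure `Q∞` is stationary for the transition probability function `Q`:
for every Borel set `B ⊆ W = [0,G]`, `∫_W Q(w,B) Q∞(dw) = Q∞(B)`. -/
theorem ocf_Qinf_stationary (B : Set ℝ) (hB : MeasurableSet B) (hBW : B ⊆ Set.Icc (0 : ℝ) G) :
    ∫ w, Qf w B ∂Qinf = (Qinf B).toReal := by
  have hae : ∀ᵐ w ∂Qinf, Qf w B = (FF B w).toReal := by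
    have h1 : ∀ᵐ w ∂(volume.restrict (Icc (0:ℝ) G)), Qf w B = (FF B w).toReal := by
      filter_upwards [ae_restrict_mem measurableSet_Icc] with w hw
      unfold FF
      rw [ENNReal.tsum_toReal_eq (fun m => by simp)]
      unfold Qf
      congr 1
      ext m
      rw [ENNReal.toReal_add (by simp) (by simp),
        ENNReal.toReal_ofReal (T_nonneg hw.1 1 (Or.inl rfl) m),
        ENNReal.toReal_ofReal (T_nonneg hw.1 (-1) (Or.inr rfl) m)]
      rfl
    exact (withDensity_absolutelyContinuous _ _).ae_le h1
  rw [integral_congr_ae hae, integral_toReal (FF_meas hB).aemeasurable, FF_int hB]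
  apply ae_lt_top (FF_meas hB)
  rw [FF_int hB]
  exact Qinf_ne_top hB
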